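/- Let G be a finite solvable BT-group with nilpotent residual L, and let H be a p-subgroup of G, where p is a prime dividing |G| but not dividing |L|. If G has a p-subgroup K_p such that HK_p is a Sylow p-subgroup of G and [H, ⟨K_p^L⟩] ≤ O_p(G), then H is SS-permutable in G. -/

import Mathlib

open scoped Pointwise

section Defs

variable {G : Type*} [Group G]

/-- `K` is an SS-permutable supplement of `H` in `G`: `HK = G` and `H` permutes with
every Sylow subgroup of `K`. -/
def IsSSSupplement (H K : Subgroup G) : Prop :=
  (H : Set G) * (K : Set G) = Set.univ ∧
    ∀ (p : ℕ) [Fact p.Prime] (P : Sylow p K),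
      (H : Set G) * ((P.toSubgroup.map K.subtype : Subgroup G) : Set G) =
        ((P.toSubgroup.map K.subtype : Subgroup G) : Set G) * (H : Set G)

/-- `H` is SS-permutable in `G`: `H` has a supplement `K` such that `H` permutes with
every Sylow subgroup of `K`. -/
def IsSSPermutable (H : Subgroup G) : Prop :=
  ∃ K : Subgroup G, IsSSSupplement H K

/-- `H` is NSS-permutable in `G`: `H` has a normal supplement `K` such that `H` permutes
with every Sylow subgroup of `K`. -/
def IsNSSPermutable (H : Subgroup G) : Prop :=
  ∃ K : Subgroup G, K.Normal ∧ IsSSSupplement H K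

/-- `H` is S-permutable in `G`: it permutes with every Sylow subgroup of `G`. -/
def IsSPermutable (H : Subgroup G) : Prop :=
  ∀ (p : ℕ) [Fact p.Prime] (P : Sylow p G),
    (H : Set G) * ((P : Subgroup G) : Set G) = ((P : Subgroup G) : Set G) * (H : Set G)

/-- `H` is semipermutable in `G`: `HX = XH` for every subgroup `X` with `gcd(|H|,|X|) = 1`. -/
def IsSemipermutable (H : Subgroup G) : Prop :=
  ∀ X : Subgroup G, Nat.Coprime (Nat.card H) (Nat.card X) →
    (H : Set G) * (X : Set G) = (X : Set G) * (H : Set G)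

/-- `H` is S-semipermutable in `G`: `HQ = QH` for every Sylow `q`-subgroup `Q` of `G`
with `q` a prime not dividing `|H|`. -/
def IsSSemipermutable (H : Subgroup G) : Prop :=
  ∀ (q : ℕ) [Fact q.Prime], ¬ q ∣ Nat.card H → ∀ Q : Sylow q G,
    (H : Set G) * ((Q : Subgroup G) : Set G) = ((Q : Subgroup G) : Set G) * (H : Set G)

end Defs

/-- `G` is an SST-group: SS-permutability is a transitive relation. -/
def IsSSTGroup (G : Type*) [Group G] : Prop :=
  ∀ H K : Subgroup G, H ≤ K → IsSSPermutable (H.subgroupOf K) → IsSSPermutable K →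
    IsSSPermutable H

/-- `G` is an NSST-group: NSS-permutability is a transitive relation. -/
def IsNSSTGroup (G : Type*) [Group G] : Prop :=
  ∀ H K : Subgroup G, H ≤ K → IsNSSPermutable (H.subgroupOf K) → IsNSSPermutable K →
    IsNSSPermutable H

/-- `G` is a PST-group: S-permutability is a transitive relation. -/
def IsPSTGroup (G : Type*) [Group G] : Prop :=
  ∀ H K : Subgroup G, H ≤ K → IsSPermutable (H.subgroupOf K) → IsSPermutable K →
    IsSPermutable H

/-- `G` is a BT-group: semipermutability is a transitive relation. -/
def IsBTGroup (G : Type*) [Group G] : Prop :=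
  ∀ H K : Subgroup G, H ≤ K → IsSemipermutable (H.subgroupOf K) → IsSemipermutable K →
    IsSemipermutable H

/-- `L` is the nilpotent residual of `G`: the smallest normal subgroup of `G`
with nilpotent quotient. -/
def IsNilpotentResidual {G : Type*} [Group G] (L : Subgroup G) : Prop :=
  L.Normal ∧ ∀ [L.Normal], Group.IsNilpotent (G ⧸ L) ∧
    ∀ (N : Subgroup G) [N.Normal], Group.IsNilpotent (G ⧸ N) → L ≤ N

/-- `O_p(G)`, the largest normal `p`-subgroup of `G` (as the join of all
normal `p`-subgroups). -/
def pCore (p : ℕ) (G : Type*) [Group G] : Subgroup G :=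
  sSup {N : Subgroup G | N.Normal ∧ IsPGroup p N}

/-!
In the nilpotent group `G ⧸ L` the Sylow `p`-subgroup has a normal complement, whose preimage is a
normal `p'`-subgroup `Y ≥ L` with `G = YQ` and `⁅Y, Q⁆ ≤ L`, where `Q = HK_p`. Hence `K = YK_p`
supplements `H`, and since `⁅Y, K_p⁆ ≤ L` every Sylow `p`-subgroup of `K` is a conjugate `B` of
`K_p` by some `l ∈ L`.

As `⁅H, B⁆ ≤ O_p(G)`, the subgroups `H` and `B` permute once `O_p(G) ⊆ HB`. Now `O_p(G) ⊆ HK_p`,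
and if `hk ∈ O_p(G)` with `h ∈ H` and `k ∈ K_p`, then `⁅l, k⁆ ∈ L` is centralized by `h`, because
`⁅h, ⁅l, k⁆⁆ ∈ O_p(G) ∩ L = 1`, and by `hk`, hence by `k`. So the order of `⁅l, k⁆` divides a power
of `p` as well as `|L|`, which gives `k = lkl⁻¹ ∈ B`.

For a prime `q ≠ p` the group `H` permutes with every `q`-subgroup because it is semipermutable. In
a BT-group, a subgroup of a normal `p`-subgroup `T` is normalized by all elements of order prime to
`p`; combined with a point of `T` fixed by a Sylow `p`-subgroup this makes the derived subgroup
hypercentral in itself, so `L` is nilpotent and `H` normalizes every subgroup of `L`. Thus `H` is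
semipermutable in the preimage of the Sylow `p`-subgroup of `G ⧸ L`, which is normal in `G`.
-/

section PGroup

open Subgroup

variable {G : Type*} [Group G] {p : ℕ} [Fact p.Prime]

theorem coprime_natCard_of_isPGroup_of_not_dvd [Finite G] (hG : IsPGroup p G) {n : ℕ}
    (hn : ¬ p ∣ n) : (Nat.card G).Coprime n := by
  obtain ⟨k, hk⟩ := IsPGroup.iff_card.mp hG
  rw [hk]
  exact ((Nat.Prime.coprime_iff_not_dvd Fact.out).mpr hn).pow_left k

theorem disjoint_of_isPGroup_of_not_dvd {P X : Subgroup G} [Finite P] (hP : IsPGroup p P)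
    (hX : ¬ p ∣ Nat.card X) : Disjoint P X :=
  disjoint_of_coprime_natCard (coprime_natCard_of_isPGroup_of_not_dvd hP hX)

theorem eq_bot_or_not_dvd_of_isPGroup_of_coprime {P X : Subgroup G} [Finite P]
    (hP : IsPGroup p P) (hPX : (Nat.card P).Coprime (Nat.card X)) :
    P = ⊥ ∨ ¬ p ∣ Nat.card X :=
  hP.card_eq_or_dvd.imp (eq_bot_of_card_eq P) fun hpP hpX =>
    Nat.not_coprime_of_dvd_of_dvd (Fact.out : p.Prime).one_lt hpP hpX hPX

theorem inf_centralizer_ne_bot_of_isPGroup {N P : Subgroup G} [N.Normal] [Finite N]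
    (hN : IsPGroup p N) (hP : IsPGroup p P) (hne : N ≠ ⊥) :
    N ⊓ centralizer (P : Set G) ≠ ⊥ := by
  let _ : MulAction P N := MulAction.compHom N ((MulAut.conjNormal (H := N)).comp P.subtype)
  have smul_coe (g : P) (x : N) : ((g • x : N) : G) = g * x * (g : G)⁻¹ :=
    MulAut.conjNormal_apply (g : G) x
  have hpN : p ∣ Nat.card N := hN.card_eq_or_dvd.resolve_left fun h => hne (eq_bot_of_card_eq _ h)
  obtain ⟨w, hw, hw1⟩ := hP.exists_fixed_point_of_prime_dvd_card_of_fixed_point N hpN (a := 1)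
    fun g => Subtype.ext (by simp [smul_coe])
  have hwP : (w : G) ∈ centralizer (P : Set G) := fun g hg =>
    mul_inv_eq_iff_eq_mul.mp ((smul_coe ⟨g, hg⟩ w).symm.trans (congrArg Subtype.val (hw ⟨g, hg⟩)))
  exact fun hbot => hw1 (Subtype.ext (mem_bot.mp (hbot.le ⟨w.2, hwP⟩)).symm)

variable [Finite G]

theorem eq_top_of_forall_exists_sylow_le {X : Subgroup G}
    (h : ∀ (q : ℕ) [Fact q.Prime], ∃ Q : Sylow q G, (Q : Subgroup G) ≤ X) : X = ⊤ := by
  by_contra hX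
  obtain ⟨q, hq, hqX⟩ := Nat.exists_prime_and_dvd (index_eq_one.not.mpr hX)
  have : Fact q.Prime := ⟨hq⟩
  obtain ⟨Q, hQ⟩ := h q
  exact Q.not_dvd_index (hqX.trans (index_dvd_of_le hQ))

theorem le_of_forall_isPGroup_le {X Y : Subgroup G}
    (h : ∀ (q : ℕ) [Fact q.Prime] (Q : Subgroup G), IsPGroup q Q → Q ≤ X → Q ≤ Y) : X ≤ Y := by
  rw [← subgroupOf_eq_top]
  refine eq_top_of_forall_exists_sylow_le fun q _ => ?_
  obtain ⟨Q⟩ : Nonempty (Sylow q X) := inferInstance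
  exact ⟨Q, map_le_iff_le_comap.mp (h q _ (Q.isPGroup'.map X.subtype) (map_subtype_le _))⟩

end PGroup

section Nilpotent

open Subgroup
open scoped commutatorElement

variable {G : Type*} [Group G]

theorem commutator_le_centralizer_of_normal_of_isCyclic (N : Subgroup G) [N.Normal] [IsCyclic N] :
    commutator G ≤ centralizer (N : Set G) := by
  let conjUnits : G →* (ZMod (Nat.card N))ˣ :=
    (IsCyclic.mulAutMulEquiv N).toMonoidHom.comp MulAut.conjNormal
  intro c hc n hn
  have hconj : MulAut.conjNormal (H := N) c = 1 :=
    (IsCyclic.mulAutMulEquiv N).map_eq_one_iff.mp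
      (Abelianization.commutator_subset_ker conjUnits hc)
  have := congrArg Subtype.val (DFunLike.congr_fun hconj ⟨n, hn⟩)
  rw [MulAut.conjNormal_apply] at this
  exact (mul_inv_eq_iff_eq_mul.mp this).symm

theorem le_of_forall_normal_commutator_le [Group.IsSolvable G] {N Z : Subgroup G} [N.Normal]
    (h : ∀ M : Subgroup G, M.Normal → M ≤ N → ⁅M, M⁆ ≤ Z → M ≤ Z) : N ≤ Z := by
  suffices descend : ∀ k, derivedSeries G k ⊓ N ≤ Z → N ≤ Z by
    obtain ⟨k, hk⟩ := (Group.isSolvable_def G).mp ‹_›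
    exact descend k (by simp [hk])
  intro k
  induction k with
  | zero => simp
  | succ k ih =>
    refine fun hk => ih (h _ inferInstance inf_le_right (le_trans (le_inf ?_ ?_) hk))
    · exact commutator_mono inf_le_left inf_le_left
    · exact (commutator_mono inf_le_right inf_le_right).trans (commutator_le_self N)

theorem isNilpotent_of_commutator_le_upperCentralSeries {M : Subgroup G} {n : ℕ}
    (hM : ⁅M, M⁆ ≤ Subgroup.upperCentralSeries G n) : Group.IsNilpotent M := by
  have lower_le (i : ℕ) (hi : i ≤ n) :
      M.lowerCentralSeries (i + 1) ≤ Subgroup.upperCentralSeries G (n - i) := by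
    induction i with
    | zero => exact hM
    | succ i ih =>
      rw [Subgroup.lowerCentralSeries_succ]
      calc ⁅M.lowerCentralSeries (i + 1), M⁆
          ≤ ⁅Subgroup.upperCentralSeries G (n - (i + 1) + 1), ⊤⁆ :=
            commutator_mono ((ih (by omega)).trans_eq (by congr 1; omega)) le_top
        _ ≤ Subgroup.upperCentralSeries G (n - (i + 1)) :=
            Subgroup.commutator_upperCentralSeries_top_le _ _
  refine isNilpotent_of_lowerCentralSeries_eq_bot (n := n + 1) (le_bot_iff.mp ?_)
  simpa using lower_le n le_rfl

theorem exists_forall_mem_upperCentralSeries_of_commutator_mem [WellFoundedGT (Subgroup G)] :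
    ∃ n, ∀ x : G, (∀ y, ⁅x, y⁆ ∈ Subgroup.upperCentralSeries G n) →
      x ∈ Subgroup.upperCentralSeries G n := by
  obtain ⟨n, hn⟩ := WellFoundedGT.monotone_chain_condition
    ⟨Subgroup.upperCentralSeries G, Subgroup.upperCentralSeries_mono G⟩
  refine ⟨n, fun x hx => ?_⟩
  exact (hn (n + 1) n.le_succ).ge (Subgroup.mem_upperCentralSeries_succ_iff.mpr hx)

variable [Finite G]

theorem normal_map_subtype_sylow_of_isNilpotent {N : Subgroup G} [N.Normal] [Group.IsNilpotent N]
    {q : ℕ} [Fact q.Prime] (Q : Sylow q N) : ((Q : Subgroup N).map N.subtype).Normal := by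
  have hQ : (Q : Subgroup N).Normal := inferInstance
  have := Q.characteristic_of_normal hQ
  infer_instance

variable {p : ℕ} [Fact p.Prime]

theorem le_centralizer_sylow_of_isNilpotent [Group.IsNilpotent G] (P : Sylow p G) {X : Subgroup G}
    (hX : ¬ p ∣ Nat.card X) : X ≤ centralizer (P : Set G) := by
  refine le_of_forall_isPGroup_le fun q _ Q hQ hQX => ?_
  rcases eq_or_ne q p with rfl | hqp
  · exact (disjoint_of_isPGroup_of_not_dvd hQ hX).eq_bot_of_le hQX |>.le.trans bot_le
  · obtain ⟨R, hQR⟩ := hQ.exists_le_sylow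
    refine hQR.trans (commutator_eq_bot_iff_le_centralizer.mp (commutator_eq_bot_of_disjoint ?_))
    exact IsPGroup.disjoint_of_ne q p hqp _ _ R.isPGroup' P.isPGroup'

theorem exists_normal_isComplement'_sylow [Group.IsNilpotent G] (P : Sylow p G) :
    ∃ N : Subgroup G, N.Normal ∧ IsComplement' N P := by
  obtain ⟨N, hNP⟩ := exists_left_complement'_of_coprime P.card_coprime_index
  have hpN : ¬ p ∣ Nat.card N := hNP.index_eq_card ▸ P.not_dvd_index
  refine ⟨N, normalizer_eq_top_iff.mp (top_le_iff.mp ?_), hNP⟩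
  calc ⊤ = N ⊔ P := hNP.sup_eq_top.symm
    _ ≤ normalizer (N : Set G) := sup_le le_normalizer
        ((le_centralizer_iff.mp (le_centralizer_sylow_of_isNilpotent P hpN)).trans
          (centralizer_le_normalizer _))

theorem exists_normal_le_sup_sylow_eq_top {L : Subgroup G} [L.Normal] [Group.IsNilpotent (G ⧸ L)]
    (hpL : ¬ p ∣ Nat.card L) (Q : Sylow p G) :
    ∃ Y : Subgroup G, Y.Normal ∧ L ≤ Y ∧ ¬ p ∣ Nat.card Y ∧ Y ⊔ Q = ⊤ ∧
      ⁅Y, (Q : Subgroup G)⁆ ≤ L := by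
  let π := QuotientGroup.mk' L
  have hπ : Function.Surjective π := QuotientGroup.mk'_surjective L
  have hker : π.ker = L := QuotientGroup.ker_mk' L
  let P := Q.mapSurjective hπ
  obtain ⟨N, hN, hNP⟩ := exists_normal_isComplement'_sylow P
  have hmap : (N.comap π).map π = N := map_comap_eq_self_of_surjective hπ N
  have hLY : L ≤ N.comap π := hker.ge.trans (ker_le_comap π N)
  refine ⟨N.comap π, inferInstance, hLY, ?_, ?_, ?_⟩
  · have hpN : ¬ p ∣ Nat.card N := hNP.index_eq_card ▸ P.not_dvd_index
    have hcard : Nat.card (N.comap π) = Nat.card L * Nat.card N :=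
      QuotientGroup.card_preimage_mk L N
    rw [hcard, (Fact.out : p.Prime).dvd_mul]
    exact not_or.mpr ⟨hpL, hpN⟩
  · have htop : (N.comap π ⊔ Q).map π = ⊤ := by
      rw [Subgroup.map_sup, hmap]
      exact hNP.sup_eq_top
    rw [← comap_map_eq_self (f := π) (hker.le.trans (hLY.trans le_sup_left)), htop, comap_top]
  · refine le_of_le_of_eq ((Subgroup.map_eq_bot_iff _).mp ?_) hker
    have hP : ((Q : Subgroup G).map π).Normal := inferInstanceAs (P : Subgroup (G ⧸ L)).Normal
    have hNQ : Disjoint N ((Q : Subgroup G).map π) := hNP.disjoint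
    rw [map_commutator, hmap, commutator_eq_bot_of_disjoint hNQ]

end Nilpotent

section BTGroup

open Subgroup
open scoped commutatorElement

variable {G : Type*} [Group G]

theorem isSemipermutable_of_normal (N : Subgroup G) [N.Normal] : IsSemipermutable N := by
  intro X _
  rw [← Subgroup.normal_mul, ← Subgroup.mul_normal, sup_comm]

theorem IsBTGroup.isSemipermutable_of_le_normal (hbt : IsBTGroup G) {A T : Subgroup G} [T.Normal]
    (hAT : A ≤ T) (hA : ∀ X ≤ T, (Nat.card A).Coprime (Nat.card X) →
      (A : Set G) * (X : Set G) = (X : Set G) * (A : Set G)) : IsSemipermutable A := by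
  refine hbt A T hAT (fun X hAX => ?_) (isSemipermutable_of_normal T)
  have hcomm := hA (X.map T.subtype) (map_subtype_le X) (by
    rwa [card_subtype, ← Nat.card_congr (subgroupOfEquivOfLe hAT).toEquiv])
  rw [← map_subgroupOf_eq_of_le hAT, coe_map, coe_map, ← Set.image_mul, ← Set.image_mul] at hcomm
  exact T.subtype_injective.image_injective hcomm

variable [Finite G]

theorem IsBTGroup.isSemipermutable_of_le_normal_isPGroup (hbt : IsBTGroup G) {p : ℕ}
    [Fact p.Prime] {A T : Subgroup G} [T.Normal] (hT : IsPGroup p T) (hAT : A ≤ T) :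
    IsSemipermutable A := by
  refine hbt.isSemipermutable_of_le_normal hAT fun X hXT hAX => ?_
  rcases eq_bot_or_not_dvd_of_isPGroup_of_coprime (hT.to_le hAT) hAX with rfl | hpX
  · simp
  · obtain rfl : X = ⊥ := (disjoint_of_isPGroup_of_not_dvd hT hpX).symm.eq_bot_of_le hXT
    simp

theorem IsBTGroup.le_normalizer_of_le_normal_isPGroup (hbt : IsBTGroup G) {p : ℕ}
    [Fact p.Prime] {A T X : Subgroup G} [T.Normal] (hT : IsPGroup p T) (hAT : A ≤ T)
    (hAX : (Nat.card A).Coprime (Nat.card X)) : X ≤ normalizer (A : Set G) := by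
  rcases eq_bot_or_not_dvd_of_isPGroup_of_coprime (hT.to_le hAT) hAX with rfl | hpX
  · exact le_normalizer_of_normal
  have hperm := hbt.isSemipermutable_of_le_normal_isPGroup hT hAT X hAX
  rw [le_normalizer_iff]
  intro x hx a ha
  obtain ⟨b, hb, y, hy, hby⟩ := hperm.ge (Set.mul_mem_mul hx ha)
  have hconj : x * a * x⁻¹ = b * (y * x⁻¹) := by
    rw [← mul_assoc]
    exact congrArg (· * x⁻¹) hby.symm
  have hyxT : y * x⁻¹ ∈ T := by
    rw [← T.mul_mem_cancel_left (hAT hb), ← hconj]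
    exact Normal.conj_mem ‹_› a (hAT ha) x
  have hyx : y * x⁻¹ = 1 :=
    disjoint_def.mp (disjoint_of_isPGroup_of_not_dvd hT hpX) hyxT (X.mul_mem hy (X.inv_mem hx))
  rw [hconj, hyx, mul_one]
  exact hb

theorem IsBTGroup.exists_normal_zpowers_of_not_le (hbt : IsBTGroup G) {p : ℕ} [Fact p.Prime]
    {T Z : Subgroup G} [T.Normal] [Z.Normal] (hT : IsPGroup p T) (hTZ : ¬ T ≤ Z) :
    ∃ w ∈ T, w ∉ Z ∧ (zpowers (w : G ⧸ Z)).Normal := by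
  let π := QuotientGroup.mk' Z
  have hπ : Function.Surjective π := QuotientGroup.mk'_surjective Z
  have hTπ : (T.map π).Normal := Normal.map ‹_› π hπ
  have hTπ_ne : T.map π ≠ ⊥ := fun h => hTZ (by simpa [π] using (map_eq_bot_iff T).mp h)
  obtain ⟨P⟩ : Nonempty (Sylow p G) := inferInstance
  obtain ⟨⟨_, ⟨w, hwT, rfl⟩, hwP⟩, hw1⟩ := ne_bot_iff_exists_ne_one.mp
    (inf_centralizer_ne_bot_of_isPGroup (hT.map π) (P.isPGroup'.map π) hTπ_ne)
  refine ⟨w, hwT, fun hwZ => hw1 (Subtype.ext ((QuotientGroup.eq_one_iff w).mpr hwZ)), ?_⟩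
  refine normalizer_eq_top_iff.mp (eq_top_of_forall_exists_sylow_le fun q _ => ?_)
  rcases eq_or_ne q p with rfl | hqp
  · refine ⟨P.mapSurjective hπ, le_trans (le_centralizer_iff.mp ?_) (centralizer_le_normalizer _)⟩
    exact zpowers_le.mpr hwP
  · obtain ⟨Q⟩ : Nonempty (Sylow q G) := inferInstance
    have hwT' : zpowers w ≤ T := zpowers_le.mpr hwT
    have hQ := hbt.le_normalizer_of_le_normal_isPGroup hT hwT'
      (IsPGroup.coprime_card_of_ne p q hqp.symm _ _ (hT.to_le hwT') Q.isPGroup')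
    refine ⟨Q.mapSurjective hπ, (map_mono hQ).trans ((le_normalizer_map π).trans_eq ?_)⟩
    rw [MonoidHom.map_zpowers]
    rfl

theorem IsBTGroup.le_of_normal_isPGroup_of_le_commutator (hbt : IsBTGroup G) {p : ℕ}
    [Fact p.Prime] {T Z : Subgroup G} [T.Normal] [Z.Normal] (hT : IsPGroup p T)
    (hTD : T ≤ commutator G)
    (hZ : ∀ x ∈ commutator G, (∀ c ∈ commutator G, ⁅x, c⁆ ∈ Z) → x ∈ Z) : T ≤ Z := by
  by_contra hTZ
  obtain ⟨w, hwT, hwZ, hw⟩ := hbt.exists_normal_zpowers_of_not_le hT hTZ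
  refine hwZ (hZ w (hTD hwT) fun c hc => ?_)
  have hcw : (c : G ⧸ Z) ∈ centralizer (zpowers (w : G ⧸ Z) : Set (G ⧸ Z)) := by
    refine commutator_le_centralizer_of_normal_of_isCyclic _ ?_
    have hle : (commutator G).map (QuotientGroup.mk' Z) ≤ commutator (G ⧸ Z) := by
      rw [commutator_def, map_commutator]
      exact commutator_mono le_top le_top
    exact hle (mem_map_of_mem (QuotientGroup.mk' Z) hc)
  rw [← QuotientGroup.eq_one_iff]
  exact commutatorElement_eq_one_iff_mul_comm.mpr (hcw _ (mem_zpowers _))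

theorem IsBTGroup.isNilpotent_commutator (hbt : IsBTGroup G) [Group.IsSolvable G] :
    Group.IsNilpotent (commutator G) := by
  set D := commutator G
  obtain ⟨n, hn⟩ := exists_forall_mem_upperCentralSeries_of_commutator_mem (G := D)
  -- `Z` is the hypercenter of `D`.
  let Z : Subgroup G := (Subgroup.upperCentralSeries D n).map D.subtype
  have pSubgroup_le (q : ℕ) [Fact q.Prime] (T : Subgroup G) (hTn : T.Normal) (hT : IsPGroup q T)
      (hTD : T ≤ D) : T ≤ Z := by
    refine hbt.le_of_normal_isPGroup_of_le_commutator hT hTD fun x hx hxZ => ?_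
    refine mem_map_of_mem D.subtype (hn ⟨x, hx⟩ fun c => ?_)
    exact (mem_map_iff_mem D.subtype_injective).mp (hxZ c c.2)
  have hDZ : D ≤ Z := by
    refine le_of_forall_normal_commutator_le fun M hMn hMD hMZ => ?_
    have hMnil : Group.IsNilpotent M := by
      have hM' : ⁅M.subgroupOf D, M.subgroupOf D⁆ ≤ Subgroup.upperCentralSeries D n := by
        rwa [← map_subtype_le_map_subtype, map_commutator, map_subgroupOf_eq_of_le hMD]
      have := isNilpotent_of_commutator_le_upperCentralSeries hM'
      exact Group.nilpotent_of_mulEquiv (subgroupOfEquivOfLe hMD)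
    rw [← subgroupOf_eq_top]
    refine eq_top_of_forall_exists_sylow_le fun q _ => ?_
    obtain ⟨Q⟩ : Nonempty (Sylow q M) := inferInstance
    exact ⟨Q, map_le_iff_le_comap.mp (pSubgroup_le q _ (normal_map_subtype_sylow_of_isNilpotent Q)
      (Q.isPGroup'.map M.subtype) ((map_subtype_le _).trans hMD))⟩
  refine ⟨n, top_le_iff.mp (map_subtype_le_map_subtype.mp (le_trans ?_ hDZ))⟩
  exact map_subtype_le _

theorem IsBTGroup.isNilpotent_of_isNilpotentResidual (hbt : IsBTGroup G) [Group.IsSolvable G]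
    {L : Subgroup G} (hL : IsNilpotentResidual L) : Group.IsNilpotent L := by
  have := hL.1
  have hLD : L ≤ commutator G :=
    hL.2.2 (commutator G) (inferInstanceAs (Group.IsNilpotent (Abelianization G)))
  have := hbt.isNilpotent_commutator
  exact Group.nilpotent_of_mulEquiv (subgroupOfEquivOfLe hLD)

theorem IsBTGroup.le_normalizer_of_le_normal_isNilpotent (hbt : IsBTGroup G)
    {N X H : Subgroup G} [N.Normal] [Group.IsNilpotent N] (hXN : X ≤ N)
    (hNH : (Nat.card N).Coprime (Nat.card H)) : H ≤ normalizer (X : Set G) := by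
  rw [le_normalizer_iff]
  intro h hh
  suffices X ≤ X.comap (MulAut.conj h).toMonoidHom from fun x hx => this hx
  refine le_of_forall_isPGroup_le fun q _ Q hQ hQX => ?_
  have hQN := hQX.trans hXN
  obtain ⟨S, hS⟩ := (hQ.comap_subtype (K := N)).exists_le_sylow
  have hSN := normal_map_subtype_sylow_of_isNilpotent S
  have hQS : Q ≤ (S : Subgroup N).map N.subtype := by
    rw [← map_subgroupOf_eq_of_le hQN]
    exact map_mono hS
  have hHQ := hbt.le_normalizer_of_le_normal_isPGroup (S.isPGroup'.map N.subtype) hQS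
    (hNH.coprime_dvd_left (card_dvd_of_le hQN))
  exact fun x hx => hQX (le_normalizer_iff.mp hHQ h hh x hx)

theorem IsBTGroup.isSemipermutable_of_isPGroup (hbt : IsBTGroup G) {L H : Subgroup G} [L.Normal]
    [Group.IsNilpotent L] [Group.IsNilpotent (G ⧸ L)] {p : ℕ} [Fact p.Prime]
    (hpL : ¬ p ∣ Nat.card L) (hH : IsPGroup p H) : IsSemipermutable H := by
  let π := QuotientGroup.mk' L
  obtain ⟨P, hHP⟩ := (hH.map π).exists_le_sylow
  have hP : ((P : Subgroup (G ⧸ L)).comap π).Normal := Normal.comap inferInstance π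
  refine hbt.isSemipermutable_of_le_normal (map_le_iff_le_comap.mp hHP) fun X hXP hHX => ?_
  rcases eq_bot_or_not_dvd_of_isPGroup_of_coprime hH hHX with rfl | hpX
  · simp
  have hXL : X ≤ L := by
    have hpXπ : ¬ p ∣ Nat.card (X.map π) := fun h => hpX (h.trans (card_map_dvd X π))
    rw [← QuotientGroup.ker_mk' L, ← Subgroup.map_eq_bot_iff]
    exact (disjoint_of_isPGroup_of_not_dvd P.isPGroup' hpXπ).symm.eq_bot_of_le
      (map_le_iff_le_comap.mpr hXP)
  exact set_mul_normalizer_comm _ _ (hbt.le_normalizer_of_le_normal_isNilpotent hXL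
    (coprime_natCard_of_isPGroup_of_not_dvd hH hpL).symm)

end BTGroup

section Supplement

open Subgroup
open scoped commutatorElement

variable {G : Type*} [Group G]

theorem eq_of_le_sup_of_disjoint {L A Q : Subgroup G} [L.Normal] (hQL : Disjoint Q L)
    (hAQ : A ≤ Q) (hQ : Q ≤ L ⊔ A) : A = Q := by
  refine le_antisymm hAQ fun x hx => ?_
  obtain ⟨l, hl, a, ha, rfl⟩ := mem_sup_of_normal_left.mp (hQ hx)
  have hl1 : l = 1 := disjoint_def.mp hQL ((Q.mul_mem_cancel_right (hAQ ha)).mp hx) hl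
  rwa [hl1, one_mul]

theorem map_subtype_sylow_eq_of_le {p : ℕ} {K P : Subgroup G} (S : Sylow p K) (hP : IsPGroup p P)
    (hPK : P ≤ K) (hSP : (S : Subgroup K).map K.subtype ≤ P) :
    (S : Subgroup K).map K.subtype = P := by
  have hS : P.subgroupOf K = S :=
    S.is_maximal' (hP.comap_subtype (K := K)) (map_le_iff_le_comap.mp hSP)
  rw [← hS, map_subgroupOf_eq_of_le hPK]

variable [Finite G] {p : ℕ} [Fact p.Prime]

theorem exists_le_map_conj_of_le_sup {L A S : Subgroup G} [L.Normal] (hpL : ¬ p ∣ Nat.card L)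
    (hA : IsPGroup p A) (hS : IsPGroup p S) (hSA : S ≤ L ⊔ A) :
    ∃ l ∈ L, S ≤ A.map (MulAut.conj l).toMonoidHom := by
  set K := L ⊔ A
  have hAK : A ≤ K := le_sup_right
  obtain ⟨Q, hQ⟩ := (hA.comap_subtype (K := K)).exists_le_sylow
  obtain ⟨R, hR⟩ := (hS.comap_subtype (K := K)).exists_le_sylow
  have hAQ : A = (Q : Subgroup K).map K.subtype := by
    refine eq_of_le_sup_of_disjoint (L := L) ?_ ?_ (map_subtype_le _)
    · exact disjoint_of_isPGroup_of_not_dvd (Q.isPGroup'.map K.subtype) hpL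
    · exact (map_subgroupOf_eq_of_le hAK).ge.trans (map_mono hQ)
  obtain ⟨g, rfl⟩ := MulAction.exists_smul_eq K Q R
  obtain ⟨l, hl, a, ha, hla⟩ := mem_sup_of_normal_left.mp g.2
  refine ⟨l, hl, ?_⟩
  calc S = (S.subgroupOf K).map K.subtype := (map_subgroupOf_eq_of_le hSA).symm
    _ ≤ ((g • Q : Sylow p K) : Subgroup K).map K.subtype := map_mono hR
    _ = ((Q : Subgroup K).map K.subtype).map (MulAut.conj (g : G)).toMonoidHom := by
      rw [Sylow.coe_subgroup_smul]
      change ((Q : Subgroup K).map (MulAut.conj g).toMonoidHom).map K.subtype = _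
      rw [map_map, map_map]
      rfl
    _ = (A.map (MulAut.conj a).toMonoidHom).map (MulAut.conj l).toMonoidHom := by
      rw [← hAQ, map_map, ← hla, map_mul]
      rfl
    _ = A.map (MulAut.conj l).toMonoidHom :=
      congrArg _ (conj_smul_eq_self_of_mem ha)

theorem exists_supplement_sylow_eq_map_conj {L H A : Subgroup G} [L.Normal]
    [Group.IsNilpotent (G ⧸ L)] (hpL : ¬ p ∣ Nat.card L) (hA : IsPGroup p A) {Q : Sylow p G}
    (hHA : (H : Set G) * (A : Set G) = (Q : Subgroup G)) :
    ∃ K : Subgroup G, (H : Set G) * (K : Set G) = Set.univ ∧ ∀ S : Sylow p K,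
      ∃ l ∈ L, (S : Subgroup K).map K.subtype = A.map (MulAut.conj l).toMonoidHom := by
  obtain ⟨Y, hY, hLY, hpY, hYQ, hYQL⟩ := exists_normal_le_sup_sylow_eq_top hpL Q
  have hAQ : A ≤ Q := fun a ha => hHA.le ⟨1, H.one_mem, a, ha, one_mul a⟩
  refine ⟨Y ⊔ A, ?_, fun S => ?_⟩
  · rw [sup_comm, mul_normal, ← mul_assoc, hHA, ← mul_normal, sup_comm, hYQ, coe_top]
  · have hS := S.isPGroup'.map (Y ⊔ A).subtype
    obtain ⟨y, hy, hSy⟩ := exists_le_map_conj_of_le_sup hpY hA hS (map_subtype_le _)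
    -- Conjugation by `y` moves `A` only by elements of `⁅Y, A⁆ ≤ L`.
    have hyL : A.map (MulAut.conj y).toMonoidHom ≤ L ⊔ A := by
      rintro _ ⟨a, ha, rfl⟩
      have hya : ⁅y, a⁆ ∈ L := hYQL (commutator_mem_commutator hy (hAQ ha))
      have := mul_mem_sup hya ha
      rwa [commutatorElement_def, inv_mul_cancel_right] at this
    obtain ⟨l, hl, hSl⟩ := exists_le_map_conj_of_le_sup hpL hA hS (hSy.trans hyL)
    refine ⟨l, hl, map_subtype_sylow_eq_of_le S (hA.map _) ?_ hSl⟩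
    rintro _ ⟨a, ha, rfl⟩
    have hlK : l ∈ Y ⊔ A := le_sup_left (a := Y) (hLY hl)
    exact mul_mem (mul_mem hlK (le_sup_right (a := Y) ha)) (inv_mem hlK)

end Supplement

section Permutability

open Subgroup
open scoped commutatorElement

variable {G : Type*} [Group G]

theorem mul_comm_of_commutator_subset_mul {H B : Subgroup G}
    (hHB : ((⁅H, B⁆ : Subgroup G) : Set G) ⊆ (H : Set G) * (B : Set G)) :
    (H : Set G) * (B : Set G) = (B : Set G) * (H : Set G) := by
  have hBH : (B : Set G) * (H : Set G) ⊆ (H : Set G) * (B : Set G) := by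
    rintro _ ⟨b, hb, h, hh, rfl⟩
    obtain ⟨h', hh', b', hb', hhb⟩ := hHB (commutator_mem_commutator (H.inv_mem hh) hb)
    refine ⟨h * h', H.mul_mem hh hh', b' * b, B.mul_mem hb' hb, ?_⟩
    calc h * h' * (b' * b) = h * (h' * b') * b := by group
      _ = b * h := by
        rw [show h' * b' = ⁅h⁻¹, b⁆ from hhb, commutatorElement_def]
        group
  refine Set.Subset.antisymm ?_ hBH
  simpa using Set.inv_subset_inv.mpr hBH

theorem orderOf_commutatorElement_dvd_of_commute {l k : G} (h : Commute k ⁅l, k⁆) :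
    orderOf ⁅l, k⁆ ∣ orderOf k := by
  have hconj : ⁅l, k⁆ * k = l * k * l⁻¹ := by rw [commutatorElement_def, inv_mul_cancel_right]
  rw [orderOf_dvd_iff_pow_eq_one]
  calc ⁅l, k⁆ ^ orderOf k = (⁅l, k⁆ * k) ^ orderOf k := by
        rw [h.symm.mul_pow, pow_orderOf_eq_one, mul_one]
    _ = 1 := by rw [hconj, conj_pow, pow_orderOf_eq_one, mul_one, mul_inv_cancel]

theorem commute_of_mul_mem_of_commutatorElement_mem {L O : Subgroup G} [L.Normal] [O.Normal]
    (hLO : Disjoint L O) {h k l : G} (hl : l ∈ L) (hhk : h * k ∈ O) (hhlk : ⁅h, ⁅l, k⁆⁆ ∈ O)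
    (hkL : (orderOf k).Coprime (Nat.card L)) : Commute l k := by
  have hlkL : ⁅l, k⁆ ∈ L := commutator_le_left L ⊤ (commutator_mem_commutator hl (mem_top k))
  have hcommh : Commute h ⁅l, k⁆ := by
    refine commutatorElement_eq_one_iff_commute.mp (disjoint_def.mp hLO ?_ hhlk)
    exact commutator_le_right ⊤ L (commutator_mem_commutator (mem_top h) hlkL)
  have hcommhk : Commute (h * k) ⁅l, k⁆ :=
    commute_of_normal_of_disjoint O L ‹_› ‹_› hLO.symm _ _ hhk hlkL
  have hcommk : Commute k ⁅l, k⁆ := by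
    simpa using hcommh.inv_left.mul_left hcommhk
  rw [← commutatorElement_eq_one_iff_commute, ← orderOf_eq_one_iff]
  exact Nat.eq_one_of_dvd_coprimes hkL (orderOf_commutatorElement_dvd_of_commute hcommk)
    (L.orderOf_dvd_natCard hlkL)

theorem mul_map_conj_comm_of_commutator_le {L H A O : Subgroup G} [L.Normal] [O.Normal]
    (hLO : Disjoint L O) (hAL : (Nat.card A).Coprime (Nat.card L))
    (hOHA : (O : Set G) ⊆ (H : Set G) * (A : Set G)) {l : G} (hl : l ∈ L)
    (hcomm : ⁅H, A ⊔ A.map (MulAut.conj l).toMonoidHom⁆ ≤ O) :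
    (H : Set G) * (A.map (MulAut.conj l).toMonoidHom : Subgroup G) =
      (A.map (MulAut.conj l).toMonoidHom : Subgroup G) * (H : Set G) := by
  refine mul_comm_of_commutator_subset_mul fun c hc => ?_
  have hcO : c ∈ O := hcomm (commutator_mono le_rfl le_sup_right hc)
  obtain ⟨h, hh, k, hk, rfl⟩ := hOHA hcO
  have hlk_conj : l * k * l⁻¹ ∈ A.map (MulAut.conj l).toMonoidHom := ⟨k, hk, rfl⟩
  have hlk : Commute l k := by
    refine commute_of_mul_mem_of_commutatorElement_mem hLO hl hcO ?_ ?_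
    · refine hcomm (commutator_mem_commutator hh ?_)
      exact mul_mem (mem_sup_right hlk_conj) (inv_mem (mem_sup_left hk))
    · exact hAL.coprime_dvd_left (A.orderOf_dvd_natCard hk)
  refine ⟨h, hh, k, ?_, rfl⟩
  rwa [hlk.eq, mul_inv_cancel_right] at hlk_conj

end Permutability

section PCore

variable {G : Type*} [Group G] {p : ℕ}

instance normal_pCore : (pCore p G).Normal :=
  Subgroup.sSup_normal _ fun _ hN => hN.1

theorem isPGroup_pCore : IsPGroup p (pCore p G) :=
  Sylow.sSup_of_normal _ (fun _ hN => hN.2) fun _ hN => hN.1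

theorem pCore_le_sylow [Fact p.Prime] [Finite G] (Q : Sylow p G) : pCore p G ≤ Q :=
  isPGroup_pCore.le_sylow_of_normal Q

end PCore

/-- Lemma 2.8. -/
theorem lemma28 {G : Type*} [Group G] [Finite G]
    (hsol : IsSolvable G) (hbt : IsBTGroup G)
    (L : Subgroup G) (hL : IsNilpotentResidual L)
    (p : ℕ) (hp : p.Prime) (hpG : p ∣ Nat.card G) (hpL : ¬ p ∣ Nat.card L)
    (H : Subgroup G) (hH : IsPGroup p H)
    (Kp : Subgroup G) (hKp : IsPGroup p Kp)
    (hSyl : ∃ Q : Sylow p G, (H : Set G) * (Kp : Set G) = ((Q : Subgroup G) : Set G))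
    (hcomm : ⁅H, ⨆ l ∈ L, Kp.map (MulAut.conj l).toMonoidHom⁆ ≤ pCore p G) :
    IsSSPermutable H := by
  have : Fact p.Prime := ⟨hp⟩
  have hsolv : Group.IsSolvable G := hsol
  have hLn : L.Normal := hL.1
  have hGL : Group.IsNilpotent (G ⧸ L) := hL.2.1
  have hLnil : Group.IsNilpotent L := hbt.isNilpotent_of_isNilpotentResidual hL
  obtain ⟨Q, hQ⟩ := hSyl
  obtain ⟨K, hHK, hK⟩ := exists_supplement_sylow_eq_map_conj hpL hKp hQ
  refine ⟨K, hHK, fun q _ S => ?_⟩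
  rcases eq_or_ne q p with rfl | hqp
  · obtain ⟨l, hl, hS⟩ := hK S
    have hKp_le : Kp ≤ ⨆ l ∈ L, Kp.map (MulAut.conj l).toMonoidHom :=
      le_iSup₂_of_le 1 L.one_mem (by rw [map_one]; exact (Subgroup.map_id Kp).ge)
    have hsup_le := sup_le hKp_le (le_iSup₂_of_le l hl le_rfl)
    rw [hS]
    exact mul_map_conj_comm_of_commutator_le
      (disjoint_of_isPGroup_of_not_dvd isPGroup_pCore hpL).symm
      (coprime_natCard_of_isPGroup_of_not_dvd hKp hpL) (hQ ▸ pCore_le_sylow Q) hl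
      ((Subgroup.commutator_mono le_rfl hsup_le).trans hcomm)
  · exact hbt.isSemipermutable_of_isPGroup hpL hH _
      (IsPGroup.coprime_card_of_ne p q hqp.symm _ _ hH (S.isPGroup'.map K.subtype))
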